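/- (Conjugate invariance) Let I, J ⊆ Δ and suppose Φ_I and Φ_J are W-conjugate; choose w ∈ W with Φ_J ∩ Φ⁺ = w(Φ_I ∩ Φ⁺). Then for all λ, μ ∈ Λ_I⁺ (so that wλ, wμ ∈ Λ_J⁺): c̃(λ, μ, Φ_I, Φ) = c̃(wλ, wμ, Φ_J, Φ). -/

import Mathlib

open scoped RealInnerProductSpace
open Classical

noncomputable section

namespace JantzenGVM

variable {V : Type*} [NormedAddCommGroup V] [InnerProductSpace ℝ V] [FiniteDimensional ℝ V]

/-- The coroot `α^∨ = 2α/⟨α,α⟩` of a vector `α` (junk value `0` when `α = 0`). -/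
def coroot (α : V) : V := (2 / ⟪α, α⟫) • α

/-- The linear functional `v ↦ ⟨v, α^∨⟩`. -/
def corootForm (α : V) : V →ₗ[ℝ] ℝ where
  toFun v := ⟪v, coroot α⟫
  map_add' x y := by simp [inner_add_left]
  map_smul' c x := by simp [inner_smul_left]

lemma corootForm_self {α : V} (h : ⟪α, α⟫ ≠ 0) : corootForm α α = 2 := by
  simp only [corootForm, coroot, LinearMap.coe_mk, AddHom.coe_mk, real_inner_smul_right]
  field_simp

/-- The reflection `s_α` as a linear automorphism of `V` (the identity when `⟨α,α⟩ = 0`). -/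
def reflV (α : V) : V ≃ₗ[ℝ] V :=
  if h : ⟪α, α⟫ = 0 then LinearEquiv.refl ℝ V
  else Module.reflection (corootForm_self h)

/-- `h* = ℂ ⊗ V`, realized as the space of real-linear functionals `V → ℂ` via the
inner product; an element `λ` pairs with a root `α` by `⟨λ, α⟩ = λ α` and with the
coroot by `⟨λ, α^∨⟩ = λ (coroot α)`. -/
abbrev HStar (V : Type*) [NormedAddCommGroup V] [InnerProductSpace ℝ V] := V →ₗ[ℝ] ℂ

/-- The canonical embedding of `V` into `h*`. -/
def emb (α : V) : HStar V where
  toFun v := (⟪α, v⟫ : ℂ)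
  map_add' x y := by simp [inner_add_right]
  map_smul' c x := by simp [inner_smul_right, Complex.real_smul]

/-- The action of a linear automorphism `w` of `V` on `h*`: `(w • λ)(v) = λ(w⁻¹ v)`. -/
def wAct (w : V ≃ₗ[ℝ] V) (l : HStar V) : HStar V := l ∘ₗ (w.symm : V →ₗ[ℝ] V)

/-- The reflection `s_β λ = λ - ⟨λ, β^∨⟩ β` acting on `h*`. -/
def sRefl (β : V) (l : HStar V) : HStar V := l - l (coroot β) • emb β

/-- The group generated by the reflections in the elements of `Φ'`. -/
def weyl (Φ' : Set V) : Subgroup (V ≃ₗ[ℝ] V) :=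
  Subgroup.closure {w | ∃ α ∈ Φ', w = reflV α}

/-- A finite, reduced, crystallographic root system spanning the Euclidean space `V`,
together with a choice of positive system and the corresponding simple system. -/
structure RootSys (V : Type*) [NormedAddCommGroup V] [InnerProductSpace ℝ V]
    [FiniteDimensional ℝ V] where
  Φ : Finset V
  pos : Finset V
  Δ : Finset V
  ne_zero : ∀ α ∈ Φ, α ≠ (0 : V)
  span_eq_top : Submodule.span ℝ (Φ : Set V) = ⊤
  reduced : ∀ α ∈ Φ, ∀ c : ℝ, c • α ∈ Φ → c = 1 ∨ c = -1
  refl_mem : ∀ α ∈ Φ, ∀ β ∈ Φ, reflV α β ∈ Φ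
  crystallographic : ∀ α ∈ Φ, ∀ β ∈ Φ, ∃ n : ℤ, ⟪β, coroot α⟫ = (n : ℝ)
  pos_subset : pos ⊆ Φ
  mem_pos_or : ∀ α ∈ Φ, α ∈ pos ∨ -α ∈ pos
  not_both : ∀ α ∈ pos, -α ∉ pos
  simple_subset : Δ ⊆ pos
  simple_indep : LinearIndependent ℝ (fun x : {a : V // a ∈ Δ} => x.1)
  simple_gen : ∀ β ∈ pos, ∃ c : V → ℝ, (∀ α ∈ Δ, 0 ≤ c α) ∧ β = ∑ α ∈ Δ, c α • α

/-- A subsystem of the root system: a subset of `Φ` closed under its own reflections. -/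
def IsSubsystem (S : RootSys V) (Φ' : Set V) : Prop :=
  Φ' ⊆ (S.Φ : Set V) ∧ ∀ α ∈ Φ', ∀ β ∈ Φ', reflV α β ∈ Φ'

/-- The length of `w`, i.e. the number of positive roots sent to negative roots
(this equals the Coxeter length for elements of the Weyl group). -/
def len (S : RootSys V) (w : V ≃ₗ[ℝ] V) : ℕ :=
  {β ∈ (S.pos : Set V) | w β ∉ (S.pos : Set V)}.ncard

/-- `Φ_I = ℤI ∩ Φ`, the subsystem generated by a subset `I` of the simple roots. -/
def PhiI (S : RootSys V) (I : Finset V) : Set V :=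
  {α ∈ (S.Φ : Set V) | α ∈ Submodule.span ℤ (I : Set V)}

/-- `z` is a positive integer. -/
def IsPosInt (z : ℂ) : Prop := ∃ n : ℤ, 0 < n ∧ z = (n : ℂ)

/-- `z` is an integer. -/
def IsInt (z : ℂ) : Prop := ∃ n : ℤ, z = (n : ℂ)

/-- `Λ_I⁺ = {λ ∈ h* : ⟨λ, α^∨⟩ ∈ ℤ_{>0} for all α ∈ I}`. -/
def LambdaP (I : Set V) : Set (HStar V) :=
  {l | ∀ α ∈ I, IsPosInt (l (coroot α))}

/-- `Λ⁺(Φ'', Φ') = {ν ∈ ℂΦ' : ⟨ν, α^∨⟩ ∈ ℤ_{>0} for all α ∈ Φ'' ∩ Φ⁺}`. -/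
def LambdaPSub (S : RootSys V) (Φ'' Φ' : Set V) : Set (HStar V) :=
  {l | l ∈ Submodule.span ℂ (emb '' Φ') ∧
       ∀ α ∈ Φ'' ∩ (S.pos : Set V), IsPosInt (l (coroot α))}

/-- `λ` is `Φ''`-regular: `⟨λ, α⟩ ≠ 0` for all `α ∈ Φ''`. -/
def IsRegularOn (Φ'' : Set V) (l : HStar V) : Prop := ∀ α ∈ Φ'', l α ≠ 0

/-- `Ψ⁺(λ, Φ'', Φ') = {β ∈ (Φ' ∩ Φ⁺) \ Φ'' : ⟨λ, β^∨⟩ ∈ ℤ_{>0}}`. -/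
def PsiP (S : RootSys V) (Φ'' Φ' : Set V) (l : HStar V) : Set V :=
  {β | β ∈ Φ' ∩ (S.pos : Set V) ∧ β ∉ Φ'' ∧ IsPosInt (l (coroot β))}

/-- `Ψ⁺⁺(λ, Φ'', Φ') = {β ∈ Ψ⁺(λ, Φ'', Φ') : s_β λ is Φ''-regular}`. -/
def PsiPP (S : RootSys V) (Φ'' Φ' : Set V) (l : HStar V) : Set V :=
  {β ∈ PsiP S Φ'' Φ' l | ∀ α ∈ Φ'', (sRefl β l) α ≠ 0}

/-- The sign function: `sgn(λ, μ) = (-1)^{ℓ(w)}` if `λ, μ` are `Φ''`-regular and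
`μ = wλ` for some `w ∈ W(Φ'')`, and `0` otherwise. -/
def sgnW (S : RootSys V) (Φ'' : Set V) (l m : HStar V) : ℤ :=
  if h : IsRegularOn Φ'' l ∧ IsRegularOn Φ'' m ∧ ∃ w, w ∈ weyl Φ'' ∧ m = wAct w l
  then (-1) ^ len S h.2.2.choose else 0

/-- The Jantzen coefficient `c(λ, μ, Φ'', Φ') = Σ_{β ∈ Ψ⁺⁺(λ,Φ'',Φ')} sgn(s_β λ, μ)`. -/
def jc (S : RootSys V) (Φ'' Φ' : Set V) (l m : HStar V) : ℤ :=
  ∑ᶠ β ∈ PsiPP S Φ'' Φ' l, sgnW S Φ'' (sRefl β l) m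

/-- The symmetrized Jantzen coefficient `c̃(λ, μ, Φ'', Φ')`. -/
def jcSym (S : RootSys V) (Φ'' Φ' : Set V) (l m : HStar V) : ℤ :=
  jc S Φ'' Φ' l m + jc S Φ'' Φ' m l

/-- `θ(λ) = Σ_{w ∈ W_I} (-1)^{ℓ(w)} e^{wλ}` in the free `ℤ`-module on `h*`. -/
def theta (S : RootSys V) (I : Finset V) (l : HStar V) : HStar V →₀ ℤ :=
  ∑ᶠ w ∈ (weyl (PhiI S I) : Set (V ≃ₗ[ℝ] V)),
    Finsupp.single (wAct w l) ((-1) ^ len S w)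

/-- `Φ_λ = {α ∈ Φ : ⟨λ, α⟩ = 0}`. -/
def singSet (S : RootSys V) (l : HStar V) : Set V :=
  {α ∈ (S.Φ : Set V) | l α = 0}

/-- `Φ_{[λ]} = {α ∈ Φ : ⟨λ, α^∨⟩ ∈ ℤ}`. -/
def integralSet (S : RootSys V) (l : HStar V) : Set V :=
  {α ∈ (S.Φ : Set V) | IsInt (l (coroot α))}

/-- `(ℚ A) ∩ Φ`, the intersection of the rational span of `A` with `Φ`.
Taking `A = Φ_I ∪ {β}` gives `Φ_{β,1}`; taking `A = Φ_λ ∪ {β}` gives `Φ_{β,2}`. -/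
def ratSpanRoots (S : RootSys V) (A : Set V) : Set V :=
  {γ ∈ (S.Φ : Set V) | ∃ (t : Finset V) (c : V → ℚ),
    (t : Set V) ⊆ A ∧ γ = ∑ α ∈ t, (c α : ℝ) • α}

/-- `Φ_{β,0}`, the irreducible component of `Φ` containing `β`. -/
def component (S : RootSys V) (β : V) : Set V :=
  {γ ∈ (S.Φ : Set V) |
    Relation.ReflTransGen
      (fun x y => x ∈ (S.Φ : Set V) ∧ y ∈ (S.Φ : Set V) ∧ ⟪x, y⟫ ≠ 0) β γ}

/-- `λ|_{Φ'}`: the unique element of `ℂΦ'` with `⟨λ|_{Φ'}, α^∨⟩ = ⟨λ, α^∨⟩`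
for all `α ∈ Φ'`. -/
def restrictW (Φ' : Set V) (l : HStar V) : HStar V :=
  letI : Nonempty (HStar V) := ⟨0⟩
  Classical.epsilon fun m =>
    m ∈ Submodule.span ℂ (emb '' Φ') ∧ ∀ α ∈ Φ', m (coroot α) = l (coroot α)

/-- `ᴵWᴶ = {w ∈ W : ℓ(uwv) = ℓ(u) + ℓ(w) + ℓ(v) for all u ∈ W_I, v ∈ W_J}`. -/
def doubleCoset (S : RootSys V) (I J : Finset V) : Set (V ≃ₗ[ℝ] V) :=
  {w | w ∈ weyl (S.Φ : Set V) ∧ ∀ u ∈ weyl (PhiI S I), ∀ v ∈ weyl (PhiI S J),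
    len S (u * w * v) = len S u + len S w + len S v}

/-- The fundamental weight `ϖ_j` relative to an enumeration `e` of the simple roots:
the unique element of `h*` with `⟨ϖ_j, α_k^∨⟩ = δ_{jk}`. -/
def fundWeight {n : ℕ} (e : Fin n → V) (j : Fin n) : HStar V :=
  letI : Nonempty (HStar V) := ⟨0⟩
  Classical.epsilon fun m => ∀ k : Fin n, m (coroot (e k)) = if k = j then 1 else 0

/-- The labels of the irreducible Dynkin types. -/
inductive LieType | A | B | C | D | E | F | G
deriving DecidableEq

/-- The Cartan matrix of type `A_n` (1-based indices): entry `(i,j)` is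
`⟨α_i, α_j^∨⟩`. -/
def cartanA (i j : ℕ) : ℤ :=
  if i = j then 2 else if i + 1 = j ∨ j + 1 = i then -1 else 0

/-- The Cartan matrices of the irreducible types in the standard (Bourbaki/Humphreys)
numbering of the Dynkin diagram: `cartanEntry t n i j = ⟨α_i, α_j^∨⟩` (1-based). -/
def cartanEntry : LieType → ℕ → ℕ → ℕ → ℤ
  | .A, _, i, j => cartanA i j
  | .B, n, i, j => if i + 1 = n ∧ j = n then -2 else cartanA i j
  | .C, n, i, j => if i = n ∧ j + 1 = n then -2 else cartanA i j
  | .D, n, i, j =>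
      if i = j then 2
      else if (i + 2 = n ∧ j = n) ∨ (i = n ∧ j + 2 = n) then -1
      else if (i + 1 = n ∧ j = n) ∨ (i = n ∧ j + 1 = n) then 0
      else cartanA i j
  | .E, _, i, j =>
      if i = j then 2
      else if (i = 1 ∧ j = 3) ∨ (i = 3 ∧ j = 1) ∨ (i = 2 ∧ j = 4) ∨ (i = 4 ∧ j = 2) then -1
      else if (i = 1 ∧ j = 2) ∨ (i = 2 ∧ j = 1) ∨ (i = 2 ∧ j = 3) ∨ (i = 3 ∧ j = 2) then 0
      else cartanA i j
  | .F, _, i, j => if i = 2 ∧ j = 3 then -2 else cartanA i j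
  | .G, _, i, j => if i = 2 ∧ j = 1 then -3 else cartanA i j

/-- The standard basis vector `e_k` (1-based index, junk `0` outside `1 ≤ k ≤ n`). -/
def stdE (n k : ℕ) : EuclideanSpace ℝ (Fin n) :=
  if h : 1 ≤ k ∧ k ≤ n then EuclideanSpace.single ⟨k - 1, by omega⟩ 1 else 0

/-- The labels `B`, `C`, `D` of the classical non-`A` types. -/
inductive BCD | B | C | D
deriving DecidableEq

/-- The root set of `B_n` / `C_n` / `D_n` in the standard realization. -/
def bcdRoots (t : BCD) (n : ℕ) : Set (EuclideanSpace ℝ (Fin n)) :=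
  {v | (∃ i j : ℕ, 1 ≤ i ∧ i < j ∧ j ≤ n ∧
          (v = stdE n i - stdE n j ∨ v = -(stdE n i - stdE n j) ∨
           v = stdE n i + stdE n j ∨ v = -(stdE n i + stdE n j))) ∨
       (match t with
        | .B => ∃ i : ℕ, 1 ≤ i ∧ i ≤ n ∧ (v = stdE n i ∨ v = -stdE n i)
        | .C => ∃ i : ℕ, 1 ≤ i ∧ i ≤ n ∧ (v = (2:ℝ) • stdE n i ∨ v = -((2:ℝ) • stdE n i))
        | .D => False)}

/-- The positive roots of `B_n` / `C_n` / `D_n` in the standard realization. -/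
def bcdPos (t : BCD) (n : ℕ) : Set (EuclideanSpace ℝ (Fin n)) :=
  {v | (∃ i j : ℕ, 1 ≤ i ∧ i < j ∧ j ≤ n ∧
          (v = stdE n i - stdE n j ∨ v = stdE n i + stdE n j)) ∨
       (match t with
        | .B => ∃ i : ℕ, 1 ≤ i ∧ i ≤ n ∧ v = stdE n i
        | .C => ∃ i : ℕ, 1 ≤ i ∧ i ≤ n ∧ v = (2:ℝ) • stdE n i
        | .D => False)}

/-- The simple roots of `B_n` / `C_n` / `D_n` in the standard realization. -/
def bcdSimple (t : BCD) (n : ℕ) : Set (EuclideanSpace ℝ (Fin n)) :=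
  {v | (∃ i : ℕ, 1 ≤ i ∧ i < n ∧ v = stdE n i - stdE n (i + 1)) ∨
       (match t with
        | .B => v = stdE n n
        | .C => v = (2:ℝ) • stdE n n
        | .D => v = stdE n (n - 1) + stdE n n)}

/-- The simple root `α_k` of `B_n` / `C_n` / `D_n` (1-based index `k`). -/
def bcdAlpha (t : BCD) (n k : ℕ) : EuclideanSpace ℝ (Fin n) :=
  if k < n then stdE n k - stdE n (k + 1)
  else match t with
  | .B => stdE n n
  | .C => (2:ℝ) • stdE n n
  | .D => stdE n (n - 1) + stdE n n


section Helpers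

lemma reflV_apply (α v : V) : reflV α v = v - ⟪v, coroot α⟫ • α := by
  unfold reflV
  split_ifs with h
  · have : α = 0 := inner_self_eq_zero.mp h
    subst this
    simp
  · rw [Module.reflection_apply]
    rfl

lemma inner_coroot (α v : V) : ⟪v, coroot α⟫ = 2 / ⟪α, α⟫ * ⟪v, α⟫ := by
  simp [coroot, real_inner_smul_right]

lemma reflV_self (α : V) : reflV α α = -α := by
  rw [reflV_apply, inner_coroot]
  by_cases h : α = 0
  · simp [h]
  · have : ⟪α, α⟫ ≠ 0 := by simpa using h
    rw [div_mul_cancel₀ _ this, two_smul]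
    abel

lemma reflV_inner (α x y : V) : ⟪reflV α x, reflV α y⟫ = ⟪x, y⟫ := by
  simp only [reflV_apply, inner_coroot]
  by_cases h : α = 0
  · simp [h]
  · have : ⟪α, α⟫ ≠ 0 := by simpa using h
    simp only [inner_sub_left, inner_sub_right, real_inner_smul_left, real_inner_smul_right,
      real_inner_comm y α]
    rw [real_inner_comm α y]
    field_simp
    ring

lemma reflV_reflV (α x : V) : reflV α (reflV α x) = x := by
  have : ∀ y, ⟪reflV α (reflV α x), y⟫ = ⟪x, y⟫ := by
    intro y
    rw [reflV_apply α (reflV α x), reflV_apply α x]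
    by_cases h : α = 0
    · simp [h]
    · have : ⟪α, α⟫ ≠ 0 := by simpa using h
      simp only [inner_sub_left, inner_coroot, real_inner_smul_left]
      field_simp
      ring
  exact ext_inner_right ℝ this

lemma reflV_mul_self (α : V) : reflV α * reflV α = 1 := by
  ext x
  exact reflV_reflV α x

lemma reflV_inv (α : V) : (reflV α)⁻¹ = reflV α :=
  inv_eq_of_mul_eq_one_right (reflV_mul_self α)

lemma coroot_neg (α : V) : coroot (-α) = -coroot α := by
  simp [coroot]

lemma reflV_neg (α : V) : reflV (-α) = reflV α := by
  ext x
  simp [reflV_apply, coroot_neg]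

/-- Linear isometries. -/
def IsIso (u : V ≃ₗ[ℝ] V) : Prop := ∀ x y, ⟪u x, u y⟫ = ⟪x, y⟫

lemma weyl_isIso {A : Set V} {u : V ≃ₗ[ℝ] V} (hu : u ∈ weyl A) : IsIso u := by
  unfold weyl at hu
  induction hu using Subgroup.closure_induction with
  | mem x hx => obtain ⟨α, -, rfl⟩ := hx; exact reflV_inner α
  | one => intro x y; rfl
  | mul a b _ _ ha hb => intro x y; exact (ha _ _).trans (hb _ _)
  | inv a _ ha =>
    intro x y
    rw [← ha]
    have : ∀ z, a (a⁻¹ z) = z := fun z => a.apply_symm_apply z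
    rw [this, this]

lemma coroot_map {u : V ≃ₗ[ℝ] V} (hu : IsIso u) (α : V) : coroot (u α) = u (coroot α) := by
  rw [coroot, coroot, hu α α, map_smul]

lemma reflV_conj {u : V ≃ₗ[ℝ] V} (hu : IsIso u) (α : V) :
    reflV (u α) = u * reflV α * u⁻¹ := by
  ext x
  have h1 : ∀ z, u (u⁻¹ z) = z := fun z => u.apply_symm_apply z
  have : (u * reflV α * u⁻¹) x = u (reflV α (u⁻¹ x)) := rfl
  rw [this, reflV_apply, reflV_apply, coroot_map hu, map_sub, map_smul, h1]
  conv_lhs => rw [← h1 x, hu]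
  rw [h1]

lemma weyl_stable {A B : Set V} (hB : ∀ α ∈ A, ∀ β ∈ B, reflV α β ∈ B)
    {u : V ≃ₗ[ℝ] V} (hu : u ∈ weyl A) : ∀ β ∈ B, u β ∈ B := by
  unfold weyl at hu
  rw [← Subgroup.mem_toSubmonoid, Subgroup.closure_toSubmonoid] at hu
  induction hu using Submonoid.closure_induction with
  | mem x hx =>
    rcases hx with hx | hx
    · obtain ⟨α, h, rfl⟩ := hx; exact hB α h
    · obtain ⟨α, h, h'⟩ := hx
      rw [inv_eq_iff_eq_inv, reflV_inv] at h'
      subst h'; exact hB α h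
  | one => intro x hx; exact hx
  | mul a b _ _ ha hb => intro x hx; exact ha _ (hb _ hx)

lemma wAct_apply (u : V ≃ₗ[ℝ] V) (l : HStar V) (v : V) : wAct u l v = l (u⁻¹ v) := rfl

lemma wAct_mul (u v : V ≃ₗ[ℝ] V) (l : HStar V) : wAct (u * v) l = wAct u (wAct v l) := by
  ext x
  simp only [wAct_apply, mul_inv_rev]
  rfl

lemma wAct_one (l : HStar V) : wAct 1 l = l := rfl

lemma wAct_inv_cancel (u : V ≃ₗ[ℝ] V) (l : HStar V) : wAct u⁻¹ (wAct u l) = l := by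
  rw [← wAct_mul, inv_mul_cancel, wAct_one]

lemma wAct_inv_of_eq {u : V ≃ₗ[ℝ] V} {l m : HStar V} (h : m = wAct u l) : wAct u⁻¹ m = l := by
  rw [h, wAct_inv_cancel]

lemma sRefl_eq (β : V) (l : HStar V) : sRefl β l = wAct (reflV β) l := by
  ext x
  rw [wAct_apply, reflV_inv, reflV_apply, inner_coroot]
  simp only [sRefl, emb, coroot, LinearMap.sub_apply, LinearMap.smul_apply, map_sub, map_smul,
    LinearMap.coe_mk, AddHom.coe_mk, smul_eq_mul, Complex.real_smul]
  rw [real_inner_comm x β]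
  push_cast
  ring

lemma PhiI_neg (S : RootSys V) (I : Finset V) {α : V} (h : α ∈ PhiI S I) : -α ∈ PhiI S I := by
  refine ⟨?_, neg_mem h.2⟩
  have := S.refl_mem α h.1 α h.1
  rwa [reflV_self] at this

lemma Phi_neg (S : RootSys V) {α : V} (h : α ∈ S.Φ) : -α ∈ S.Φ := by
  have := S.refl_mem α h α h
  rwa [reflV_self] at this

lemma PhiI_refl (S : RootSys V) (I : Finset V) : ∀ α ∈ PhiI S I, ∀ β ∈ PhiI S I,
    reflV α β ∈ PhiI S I := by
  intro α ha β hb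
  refine ⟨S.refl_mem α ha.1 β hb.1, ?_⟩
  obtain ⟨n, hn⟩ := S.crystallographic α ha.1 β hb.1
  rw [reflV_apply, hn, Int.cast_smul_eq_zsmul]
  exact sub_mem hb.2 (zsmul_mem ha.2 n)

lemma weyl_PhiI {S : RootSys V} {I : Finset V} {u : V ≃ₗ[ℝ] V} (hu : u ∈ weyl (PhiI S I)) :
    ∀ β ∈ PhiI S I, u β ∈ PhiI S I := weyl_stable (PhiI_refl S I) hu

lemma weyl_PhiI_Phi {S : RootSys V} {I : Finset V} {u : V ≃ₗ[ℝ] V} (hu : u ∈ weyl (PhiI S I)) :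
    ∀ β ∈ S.Φ, u β ∈ S.Φ :=
  weyl_stable (B := (S.Φ : Set V)) (fun α ha β hb => S.refl_mem α ha.1 β hb) hu

lemma simple_mem_PhiI {S : RootSys V} {I : Finset V} (hI : I ⊆ S.Δ) {a : V} (ha : a ∈ I) :
    a ∈ PhiI S I :=
  ⟨S.pos_subset (S.simple_subset (hI ha)), Submodule.subset_span ha⟩

lemma exists_functional (S : RootSys V) (c : V → ℝ) :
    ∃ f : V →ₗ[ℝ] ℝ, ∀ δ ∈ S.Δ, f δ = c δ := by
  obtain ⟨f, hf⟩ := LinearMap.exists_extend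
    ((Module.Basis.span S.simple_indep).constr ℝ (fun x : {a : V // a ∈ S.Δ} => c x.1))
  refine ⟨f, fun δ hδ => ?_⟩
  have h1 := (Module.Basis.span S.simple_indep).constr_basis ℝ
    (fun x : {a : V // a ∈ S.Δ} => c x.1) ⟨δ, hδ⟩
  rw [← hf] at h1
  rw [← h1, LinearMap.comp_apply, Submodule.subtype_apply, Module.Basis.span_apply]

lemma pos_nonneg (S : RootSys V) {f : V →ₗ[ℝ] ℝ} (hf : ∀ δ ∈ S.Δ, 0 ≤ f δ) {β : V}
    (hβ : β ∈ S.pos) : 0 ≤ f β := by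
  obtain ⟨c, hc, rfl⟩ := S.simple_gen β hβ
  rw [map_sum]
  exact Finset.sum_nonneg fun δ hδ => by
    rw [map_smul]; exact mul_nonneg (hc δ hδ) (hf δ hδ)

lemma mem_pos_of (S : RootSys V) {f : V →ₗ[ℝ] ℝ} (hf : ∀ δ ∈ S.Δ, 0 ≤ f δ) {β : V}
    (hβ : β ∈ S.Φ) (h : 0 < f β) : β ∈ S.pos := by
  rcases S.mem_pos_or β hβ with h1 | h1
  · exact h1
  · have := pos_nonneg S hf h1
    rw [map_neg] at this
    linarith

lemma neg_mem_pos {S : RootSys V} {β : V} (hβ : β ∈ S.Φ) : -β ∈ S.pos ↔ β ∉ S.pos := by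
  constructor
  · intro h h'; exact S.not_both β h' h
  · intro h; exact (S.mem_pos_or β hβ).resolve_left h

lemma simple_refl_pos (S : RootSys V) {a β : V} (ha : a ∈ S.Δ) (hβ : β ∈ S.pos) (hne : β ≠ a) :
    reflV a β ∈ S.pos := by
  have haΦ := S.pos_subset (S.simple_subset ha)
  have hβΦ := S.pos_subset hβ
  obtain ⟨c, hc, hs⟩ := S.simple_gen β hβ
  have hex : ∃ δ ∈ S.Δ, δ ≠ a ∧ 0 < c δ := by
    by_contra! hcon
    have h0 : ∀ δ ∈ S.Δ, δ ≠ a → c δ • δ = 0 := fun δ hδ hda => by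
      rw [le_antisymm (hcon δ hδ hda) (hc δ hδ), zero_smul]
    rw [Finset.sum_eq_single_of_mem a ha h0] at hs
    rcases S.reduced a haΦ (c a) (hs ▸ hβΦ) with h | h
    · rw [h, one_smul] at hs; exact hne hs
    · rw [h, neg_one_smul] at hs
      exact S.not_both a (S.simple_subset ha) (hs ▸ hβ)
  obtain ⟨δ, hδ, hda, hpos⟩ := hex
  obtain ⟨f, hf⟩ := exists_functional S (fun x => if x = δ then 1 else 0)
  refine mem_pos_of S (f := f) ?_ (S.refl_mem a haΦ β hβΦ) ?_
  · intro x hx; rw [hf x hx]; split_ifs <;> norm_num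
  · rw [reflV_apply, map_sub, map_smul, hf a ha, if_neg (Ne.symm hda), smul_zero, sub_zero, hs,
      map_sum]
    rw [Finset.sum_eq_single_of_mem δ hδ]
    · rw [map_smul, hf δ hδ]; simpa using hpos
    · intro x hx hxd
      rw [map_smul, hf x hx, if_neg hxd, smul_zero]

/-- Positive roots of `Φ_I` are nonnegative combinations of `I`. -/
lemma PhiI_pos_gen (S : RootSys V) {I : Finset V} (hI : I ⊆ S.Δ) {β : V} (hβ : β ∈ PhiI S I)
    (hp : β ∈ S.pos) : ∃ c : V → ℝ, (∀ α ∈ I, 0 ≤ c α) ∧ β = ∑ α ∈ I, c α • α := by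
  obtain ⟨c, hc, hs⟩ := S.simple_gen β hp
  refine ⟨c, fun α h => hc α (hI h), ?_⟩
  conv_lhs => rw [hs]
  symm
  apply Finset.sum_subset hI
  intro δ hδ hδI
  obtain ⟨f, hf⟩ := exists_functional S (fun x => if x = δ then 1 else 0)
  have h1 : f β = c δ := by
    rw [hs, map_sum, Finset.sum_eq_single_of_mem δ hδ]
    · rw [map_smul, hf δ hδ]; simp
    · intro x hx hxd
      rw [map_smul, hf x hx, if_neg hxd, smul_zero]
  have h2 : f β = 0 := by
    have hz := hβ.2
    clear h1 hs hp hβ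
    induction hz using Submodule.span_induction with
    | mem x hx =>
      rw [hf x (hI hx), if_neg]
      rintro rfl; exact hδI hx
    | zero => simp
    | add x y _ _ h h' => rw [map_add, h, h', add_zero]
    | smul n x _ h => rw [map_zsmul, h, smul_zero]
  rw [← h1, h2, zero_smul]

/-- Product of a word of reflections. -/
def wprod (L : List V) : V ≃ₗ[ℝ] V := (L.map reflV).prod

lemma wprod_cons (a : V) (L : List V) : wprod (a :: L) = reflV a * wprod L := by
  simp [wprod]

lemma wprod_append (L M : List V) : wprod (L ++ M) = wprod L * wprod M := by
  simp [wprod]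

lemma wprod_singleton (a : V) : wprod [a] = reflV a := by simp [wprod]

lemma wprod_mem {A : Set V} {L : List V} (hL : ∀ a ∈ L, a ∈ A) : wprod L ∈ weyl A := by
  apply Subgroup.list_prod_mem
  intro x hx
  obtain ⟨a, ha, rfl⟩ := List.mem_map.mp hx
  exact Subgroup.subset_closure ⟨a, hL a ha, rfl⟩

lemma refl_word (S : RootSys V) {I : Finset V} (hI : I ⊆ S.Δ) {α : V} (hα : α ∈ PhiI S I) :
    reflV α ∈ weyl (I : Set V) := by
  obtain ⟨f, hf⟩ := exists_functional S (fun _ => 1)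
  have key : ∀ P : Finset V, ∀ α ∈ PhiI S I, α ∈ S.pos → (S.Φ.filter (fun x => f x < f α)) = P →
      reflV α ∈ weyl (I : Set V) := by
    intro P
    induction P using Finset.strongInduction with
    | H P ih =>
      intro α hα hp hP
      by_cases hαI : α ∈ I
      · exact Subgroup.subset_closure ⟨α, hαI, rfl⟩
      obtain ⟨c, hc, hs⟩ := PhiI_pos_gen S hI hα hp
      have hex : ∃ δ ∈ I, 0 < ⟪α, δ⟫ := by
        by_contra! hcon
        have h1 : ⟪α, α⟫ ≤ 0 := by
          have h0 : ⟪α, α⟫ = ∑ δ ∈ I, ⟪c δ • δ, α⟫ := by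
            rw [← sum_inner, ← hs]
          rw [h0]
          apply Finset.sum_nonpos
          intro δ hδ
          rw [real_inner_smul_left, real_inner_comm]
          exact mul_nonpos_of_nonneg_of_nonpos (hc δ hδ) (hcon δ hδ)
        have h2 : α = 0 := inner_self_eq_zero.mp (le_antisymm h1 real_inner_self_nonneg)
        exact S.ne_zero α hα.1 h2
      obtain ⟨δ, hδ, hpos⟩ := hex
      have hδΦ := simple_mem_PhiI hI hδ
      have hne : α ≠ δ := by rintro rfl; exact hαI hδ
      have h1 : f (reflV δ α) < f α := by
        rw [reflV_apply, map_sub, map_smul, hf δ (hI hδ), inner_coroot]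
        have : 0 < ⟪δ, δ⟫ := real_inner_self_pos.mpr (S.ne_zero δ hδΦ.1)
        have : 0 < 2 / ⟪δ, δ⟫ * ⟪α, δ⟫ := by positivity
        simp only [smul_eq_mul, mul_one]
        linarith
      have h2 := ih (S.Φ.filter (fun x => f x < f (reflV δ α))) (by
        rw [← hP]
        refine Finset.ssubset_iff_subset_ne.mpr ⟨?_, ?_⟩
        · intro x hx
          rw [Finset.mem_filter] at hx ⊢
          exact ⟨hx.1, hx.2.trans h1⟩
        · intro he
          have : reflV δ α ∈ S.Φ.filter (fun x => f x < f α) :=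
            Finset.mem_filter.mpr ⟨S.refl_mem δ hδΦ.1 α hα.1, h1⟩
          rw [← he, Finset.mem_filter] at this
          exact lt_irrefl _ this.2) (reflV δ α) (PhiI_refl S I δ hδΦ α hα)
          (simple_refl_pos S (hI hδ) hp hne) rfl
      rw [reflV_conj (reflV_inner δ)] at h2
      have h3 : reflV δ ∈ weyl (I : Set V) := Subgroup.subset_closure ⟨δ, hδ, rfl⟩
      have h4 := (weyl (I : Set V)).mul_mem ((weyl (I : Set V)).mul_mem
        ((weyl (I : Set V)).inv_mem h3) h2) h3
      simpa [mul_assoc] using h4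
  rcases S.mem_pos_or α hα.1 with h | h
  · exact key _ α hα h rfl
  · have := key _ (-α) (PhiI_neg S I hα) h rfl
    rwa [reflV_neg] at this

lemma weyl_PhiI_eq (S : RootSys V) {I : Finset V} (hI : I ⊆ S.Δ) :
    weyl (PhiI S I) = weyl (I : Set V) := by
  apply le_antisymm
  · refine (Subgroup.closure_le _).mpr ?_
    rintro _ ⟨α, hα, rfl⟩
    exact refl_word S hI hα
  · apply Subgroup.closure_mono
    rintro _ ⟨α, hα, rfl⟩
    exact ⟨α, simple_mem_PhiI hI hα, rfl⟩

lemma exists_word (S : RootSys V) {I : Finset V} (hI : I ⊆ S.Δ) {u : V ≃ₗ[ℝ] V}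
    (hu : u ∈ weyl (PhiI S I)) : ∃ L : List V, (∀ a ∈ L, a ∈ I) ∧ u = wprod L := by
  rw [weyl_PhiI_eq S hI] at hu
  unfold weyl at hu
  rw [← Subgroup.mem_toSubmonoid, Subgroup.closure_toSubmonoid] at hu
  induction hu using Submonoid.closure_induction with
  | mem x hx =>
    rcases hx with hx | hx
    · obtain ⟨α, h, rfl⟩ := hx
      exact ⟨[α], by simpa using h, (wprod_singleton α).symm⟩
    · obtain ⟨α, h, h'⟩ := hx
      rw [inv_eq_iff_eq_inv, reflV_inv] at h'
      subst h'
      exact ⟨[α], by simpa using h, (wprod_singleton α).symm⟩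
  | one => exact ⟨[], by simp, rfl⟩
  | mul a b _ _ ha hb =>
    obtain ⟨L, hL, rfl⟩ := ha
    obtain ⟨M, hM, rfl⟩ := hb
    refine ⟨L ++ M, ?_, (wprod_append L M).symm⟩
    intro x hx
    rcases List.mem_append.mp hx with h | h
    · exact hL x h
    · exact hM x h

lemma exchange (S : RootSys V) {I : Finset V} (hI : I ⊆ S.Δ) {α : V} (hα : α ∈ I) (L : List V)
    (hL : ∀ a ∈ L, a ∈ I) (hneg : wprod L α ∉ S.pos) :
    ∃ M : List V, (∀ a ∈ M, a ∈ I) ∧ M.length < L.length ∧ wprod L = wprod M * reflV α := by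
  induction L with
  | nil => exact absurd (S.simple_subset (hI hα)) hneg
  | cons a L ih =>
    have haI := hL a (by simp)
    have hL' : ∀ x ∈ L, x ∈ I := fun x hx => hL x (by simp [hx])
    by_cases h : wprod L α ∈ S.pos
    · have h1 : wprod L α = a := by
        by_contra hne
        apply hneg
        rw [wprod_cons]
        exact simple_refl_pos S (hI haI) h hne
      refine ⟨L, hL', by simp, ?_⟩
      have hiso : IsIso (wprod L) := weyl_isIso (A := (I : Set V)) (wprod_mem hL')
      rw [wprod_cons, ← h1, reflV_conj hiso]
      simp [mul_assoc]
    · obtain ⟨M, hM, hlen, he⟩ := ih hL' h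
      refine ⟨a :: M, ?_, by simpa using hlen, ?_⟩
      · intro x hx
        rcases List.mem_cons.mp hx with h | h
        · rw [h]; exact haI
        · exact hM x h
      · rw [wprod_cons, wprod_cons, he, mul_assoc]

lemma word_trivial (S : RootSys V) {I : Finset V} (hI : I ⊆ S.Δ) (n : ℕ) : ∀ L : List V,
    L.length = n → (∀ a ∈ L, a ∈ I) → (∀ a ∈ I, wprod L a ∈ S.pos) → wprod L = 1 := by
  induction n using Nat.strong_induction_on with
  | _ n ih =>
    intro L hn hL hp
    rcases List.eq_nil_or_concat L with rfl | ⟨L', α, rfl⟩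
    · rfl
    · rw [List.concat_eq_append] at *
      have hα : α ∈ I := hL α (by simp)
      have hL' : ∀ x ∈ L', x ∈ I := fun x hx => hL x (by simp [hx])
      have hpα := hp α hα
      have h1 : wprod (L' ++ [α]) = wprod L' * reflV α := by
        rw [wprod_append, wprod_singleton]
      have h2 : wprod L' α ∉ S.pos := by
        intro h
        have : wprod (L' ++ [α]) α = -(wprod L' α) := by
          rw [h1]
          change wprod L' (reflV α α) = _
          rw [reflV_self, map_neg]
        rw [this] at hpα
        exact S.not_both _ h hpα
      obtain ⟨M, hM, hlen, he⟩ := exchange S hI hα L' hL' h2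
      have h3 : wprod (L' ++ [α]) = wprod M := by
        rw [h1, he, mul_assoc, reflV_mul_self, mul_one]
      rw [h3] at hp ⊢
      refine ih M.length ?_ M rfl hM hp
      rw [← hn]; simp; omega

lemma weyl_trivial (S : RootSys V) {I : Finset V} (hI : I ⊆ S.Δ) {u : V ≃ₗ[ℝ] V}
    (hu : u ∈ weyl (PhiI S I)) (hp : ∀ a ∈ I, u a ∈ S.pos) : u = 1 := by
  obtain ⟨L, hL, rfl⟩ := exists_word S hI hu
  exact word_trivial S hI _ L rfl hL hp

/-- `W_I` preserves `Φ⁺ \ Φ_I`. -/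
lemma weyl_pos_diff (S : RootSys V) {I : Finset V} (hI : I ⊆ S.Δ) {u : V ≃ₗ[ℝ] V}
    (hu : u ∈ weyl (PhiI S I)) {β : V} (hβ : β ∈ S.pos) (hn : β ∉ PhiI S I) :
    u β ∈ S.pos ∧ u β ∉ PhiI S I := by
  rw [weyl_PhiI_eq S hI] at hu
  refine weyl_stable (A := (I : Set V)) (B := {β | β ∈ S.pos ∧ β ∉ PhiI S I}) ?_ hu β ⟨hβ, hn⟩
  rintro α hα β ⟨hβ, hn⟩
  have hαI := simple_mem_PhiI hI hα
  refine ⟨simple_refl_pos S (hI hα) hβ ?_, ?_⟩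
  · rintro rfl; exact hn hαI
  · intro h
    have := PhiI_refl S I α hαI _ h
    rw [reflV_reflV] at this
    exact hn this

/-- Dominance and regularity on `Φ_I`. -/
def Dom (S : RootSys V) (I : Finset V) (l : HStar V) : Prop :=
  ∀ α ∈ PhiI S I, α ∈ S.pos → 0 < (l α).re

lemma Dom.reg {S : RootSys V} {I : Finset V} {l : HStar V} (h : Dom S I l) :
    IsRegularOn (PhiI S I) l := by
  intro α hα h0
  rcases S.mem_pos_or α hα.1 with hp | hp
  · have := h α hα hp
    simp [h0] at this
  · have := h (-α) (PhiI_neg S I hα) hp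
    simp [h0] at this

lemma dom_of_lambda {S : RootSys V} {I : Finset V} (hI : I ⊆ S.Δ) {l : HStar V}
    (hl : l ∈ LambdaP (I : Set V)) : Dom S I l := by
  intro α hα hp
  obtain ⟨c, hc, hs⟩ := PhiI_pos_gen S hI hα hp
  have hpos : ∀ δ ∈ I, 0 < (l δ).re := by
    intro δ hδ
    obtain ⟨n, hn, h⟩ := hl δ hδ
    have h0 : 0 < ⟪δ, δ⟫ := real_inner_self_pos.mpr (S.ne_zero δ (simple_mem_PhiI hI hδ).1)
    have h1 := congrArg Complex.re h
    rw [coroot, map_smul, Complex.smul_re, Complex.intCast_re, smul_eq_mul] at h1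
    have h2 : (0:ℝ) < n := by exact_mod_cast hn
    rw [← h1] at h2
    exact (pos_iff_pos_of_mul_pos h2).mp (by positivity)
  have h1 : (l α).re = ∑ δ ∈ I, c δ * (l δ).re := by
    conv_lhs => rw [hs]
    simp [map_sum]
  rw [h1]
  apply lt_of_le_of_ne (Finset.sum_nonneg fun δ hδ => mul_nonneg (hc δ hδ) (hpos δ hδ).le)
  intro h0
  have h2 := (Finset.sum_eq_zero_iff_of_nonneg
    (fun δ hδ => mul_nonneg (hc δ hδ) (hpos δ hδ).le)).mp h0.symm
  apply S.ne_zero α hα.1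
  rw [hs]
  apply Finset.sum_eq_zero
  intro δ hδ
  rcases mul_eq_zero.mp (h2 δ hδ) with h | h
  · rw [h, zero_smul]
  · exact absurd h (hpos δ hδ).ne'

lemma Dom.free {S : RootSys V} {I : Finset V} (hI : I ⊆ S.Δ) {l : HStar V} (h : Dom S I l)
    {u v : V ≃ₗ[ℝ] V} (hu : u ∈ weyl (PhiI S I)) (hv : v ∈ weyl (PhiI S I))
    (he : wAct u l = wAct v l) : u = v := by
  have hm : u⁻¹ * v ∈ weyl (PhiI S I) := mul_mem (inv_mem hu) hv
  have h1 : wAct (u⁻¹ * v) l = l := by rw [wAct_mul, ← he, wAct_inv_cancel]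
  have h2 : u⁻¹ * v = 1 := by
    apply weyl_trivial S hI hm
    intro a ha
    have haI := simple_mem_PhiI hI ha
    have h3 := weyl_PhiI hm a haI
    by_contra hneg
    have h4 := h _ (PhiI_neg S I h3) ((neg_mem_pos h3.1).mpr hneg)
    have h5 := h a haI (S.simple_subset (hI ha))
    have h6 : l ((u⁻¹ * v) a) = l a := by
      conv_lhs => rw [← h1]
      rw [wAct_apply]
      congr 1
      exact (u⁻¹ * v).symm_apply_apply a
    rw [map_neg, h6, Complex.neg_re] at h4
    linarith
  exact (inv_mul_eq_one.mp h2)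

lemma sgnW_eq {S : RootSys V} {I : Finset V} (hI : I ⊆ S.Δ) {l m : HStar V} (hm : Dom S I m)
    {u : V ≃ₗ[ℝ] V} (hu : u ∈ weyl (PhiI S I)) (he : m = wAct u l) :
    sgnW S (PhiI S I) l m = (-1) ^ len S u := by
  have hl : l = wAct u⁻¹ m := by rw [he, wAct_inv_cancel]
  have hreg : IsRegularOn (PhiI S I) l := by
    intro α hα
    rw [hl, wAct_apply, inv_inv]
    exact hm.reg _ (weyl_PhiI hu α hα)
  have h : IsRegularOn (PhiI S I) l ∧ IsRegularOn (PhiI S I) m ∧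
    ∃ w, w ∈ weyl (PhiI S I) ∧ m = wAct w l := ⟨hreg, hm.reg, u, hu, he⟩
  unfold sgnW
  rw [dif_pos h]
  have h1 := h.2.2.choose_spec
  have h2 : h.2.2.choose⁻¹ = u⁻¹ := by
    apply hm.free hI (inv_mem h1.1) (inv_mem hu)
    rw [← hl]
    exact wAct_inv_of_eq h1.2
  rw [inv_inj.mp h2]

lemma sgnW_ne_zero {S : RootSys V} {A : Set V} {l m : HStar V} (h : sgnW S A l m ≠ 0) :
    ∃ u, u ∈ weyl A ∧ m = wAct u l := by
  unfold sgnW at h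
  split_ifs at h with h'
  · exact h'.2.2
  · exact absurd rfl h

lemma len_eq {S : RootSys V} {I : Finset V} (hI : I ⊆ S.Δ)
    {u : V ≃ₗ[ℝ] V} (hu : u ∈ weyl (PhiI S I)) :
    len S u = {β | β ∈ PhiI S I ∩ (S.pos : Set V) ∧ u β ∉ PhiI S I ∩ (S.pos : Set V)}.ncard := by
  unfold len
  congr 1
  ext β
  constructor
  · rintro ⟨h1, h2⟩
    have hβ : β ∈ PhiI S I := by
      by_contra hn
      exact h2 (weyl_pos_diff S hI hu h1 hn).1
    exact ⟨⟨hβ, h1⟩, fun h => h2 h.2⟩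
  · rintro ⟨h1, h2⟩
    exact ⟨h1.2, fun h => h2 ⟨weyl_PhiI hu β h1.1, h⟩⟩

lemma len_inv {S : RootSys V} {I : Finset V}
    {u : V ≃ₗ[ℝ] V} (hu : u ∈ weyl (PhiI S I)) : len S u⁻¹ = len S u := by
  unfold len
  have key : {β ∈ (S.pos : Set V) | u⁻¹ β ∉ (S.pos : Set V)} =
      (fun β => -(u β)) '' {β ∈ (S.pos : Set V) | u β ∉ (S.pos : Set V)} := by
    ext β
    have h1 : ∀ z, u (u⁻¹ z) = z := fun z => u.apply_symm_apply z
    have h2 : ∀ z, u⁻¹ (u z) = z := fun z => u.symm_apply_apply z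
    constructor
    · rintro ⟨hp, hn⟩
      have h3 := weyl_PhiI_Phi (inv_mem hu) β (S.pos_subset hp)
      refine ⟨-(u⁻¹ β), ⟨(neg_mem_pos h3).mpr hn, ?_⟩, ?_⟩
      · rw [map_neg, h1]; exact S.not_both β hp
      · simp only [map_neg, h1, neg_neg]
    · rintro ⟨γ, ⟨hp, hn⟩, rfl⟩
      have h3 := weyl_PhiI_Phi hu γ (S.pos_subset hp)
      refine ⟨(neg_mem_pos h3).mpr hn, ?_⟩
      simp only [map_neg, h2]
      exact S.not_both γ hp
  rw [key]
  apply Set.ncard_image_of_injective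
  intro x y hxy
  exact u.injective (neg_injective hxy)

/-- Index set of the orientation-free sum. -/
def idx (S : RootSys V) (I : Finset V) (l : HStar V) : Finset V :=
  S.Φ.filter (fun β => β ∉ PhiI S I ∧ IsPosInt (l (coroot β)))

lemma jc_eq (S : RootSys V) (I : Finset V) (l m : HStar V) :
    jc S (PhiI S I) (S.Φ : Set V) l m =
      ∑ β ∈ (idx S I l).filter (fun β => β ∈ S.pos), sgnW S (PhiI S I) (sRefl β l) m := by
  unfold jc
  apply finsum_mem_eq_sum_of_inter_support_eq
  ext β
  simp only [Set.mem_inter_iff, Function.mem_support, Finset.mem_coe, Finset.mem_filter, idx,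
    PsiPP, PsiP, Set.mem_setOf_eq]
  constructor
  · rintro ⟨⟨⟨⟨h1, h2⟩, h3, h4⟩, h5⟩, h6⟩
    exact ⟨⟨⟨h1, h3, h4⟩, h2⟩, h6⟩
  · rintro ⟨⟨⟨h1, h3, h4⟩, h2⟩, h6⟩
    refine ⟨⟨⟨⟨h1, h2⟩, h3, h4⟩, ?_⟩, h6⟩
    unfold sgnW at h6
    split_ifs at h6 with h'
    · exact h'.1
    · exact absurd rfl h6

/-- The element carrying `s_β l` to `m`, if there is one. -/
def carrier (S : RootSys V) (I : Finset V) (l m : HStar V) (β : V) : V ≃ₗ[ℝ] V :=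
  if h : ∃ u, u ∈ weyl (PhiI S I) ∧ m = wAct u (sRefl β l) then h.choose else 1

/-- The basic correspondence between terms of the two sums. -/
lemma flip_term {S : RootSys V} {I : Finset V} (hI : I ⊆ S.Δ) {l m : HStar V}
    {u : V ≃ₗ[ℝ] V} (hu : u ∈ weyl (PhiI S I)) {β : V} (he : m = wAct u (sRefl β l))
    (hβ : β ∈ idx S I l) :
    -(u β) ∈ idx S I m ∧ sRefl (-(u β)) m = wAct u l ∧ (-(u β) ∈ S.pos ↔ β ∉ S.pos) := by
  have hiso := weyl_isIso hu
  obtain ⟨h1, h2, h3⟩ := Finset.mem_filter.mp hβ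
  have hc : ∀ z, u⁻¹ (u z) = z := fun z => u.symm_apply_apply z
  have huΦ := weyl_PhiI_Phi hu β h1
  have hn : u β ∉ PhiI S I := by
    intro h
    have := weyl_PhiI (inv_mem hu) _ h
    rw [hc] at this
    exact h2 this
  refine ⟨Finset.mem_filter.mpr ⟨Phi_neg S huΦ, ?_, ?_⟩, ?_, ?_⟩
  · intro h
    have := PhiI_neg S I h
    rw [neg_neg] at this
    exact hn this
  · have : m (coroot (-(u β))) = l (coroot β) := by
      rw [coroot_neg, coroot_map hiso, he, map_neg, wAct_apply, hc, sRefl_eq, wAct_apply,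
        reflV_inv, ← map_neg]
      congr 1
      rw [coroot, map_smul, reflV_self, smul_neg, neg_neg]
    rw [this]
    exact h3
  · rw [sRefl_eq, reflV_neg, reflV_conj hiso, he, sRefl_eq, ← wAct_mul, ← wAct_mul]
    congr 1
    simp [mul_assoc, reflV_mul_self]
  · rw [neg_mem_pos huΦ, not_iff_not]
    constructor
    · intro h
      have := (weyl_pos_diff S hI (inv_mem hu) h hn).1
      rwa [hc] at this
    · intro h
      exact (weyl_pos_diff S hI hu h h2).1

lemma jcSym_eq {S : RootSys V} {I : Finset V} (hI : I ⊆ S.Δ) {l m : HStar V}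
    (hl : Dom S I l) (hm : Dom S I m) :
    jcSym S (PhiI S I) (S.Φ : Set V) l m =
      ∑ β ∈ idx S I l, sgnW S (PhiI S I) (sRefl β l) m := by
  unfold jcSym
  rw [← Finset.sum_filter_add_sum_filter_not (idx S I l) (fun β => β ∈ S.pos), jc_eq, jc_eq]
  congr 1
  symm
  have hcar : ∀ β, sgnW S (PhiI S I) (sRefl β l) m ≠ 0 →
      carrier S I l m β ∈ weyl (PhiI S I) ∧ m = wAct (carrier S I l m β) (sRefl β l) := by
    intro β h
    have h' := sgnW_ne_zero h
    unfold carrier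
    rw [dif_pos h']
    exact h'.choose_spec
  refine Finset.sum_bij_ne_zero (fun β _ _ => -(carrier S I l m β β)) ?_ ?_ ?_ ?_
  · intro β h1 h2
    obtain ⟨hu, he⟩ := hcar β h2
    obtain ⟨h3, h4⟩ := Finset.mem_filter.mp h1
    obtain ⟨h5, h6, h7⟩ := flip_term hI hu he h3
    exact Finset.mem_filter.mpr ⟨h5, h7.mpr h4⟩
  · intro β h1 h2 β' h1' h2' heq
    obtain ⟨hu, he⟩ := hcar β h2
    obtain ⟨hu', he'⟩ := hcar β' h2'
    obtain ⟨-, h6, -⟩ := flip_term hI hu he (Finset.mem_filter.mp h1).1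
    obtain ⟨-, h6', -⟩ := flip_term hI hu' he' (Finset.mem_filter.mp h1').1
    have heq' : -(carrier S I l m β β) = -(carrier S I l m β' β') := heq
    rw [heq', h6'] at h6
    have := hl.free hI hu' hu h6
    rw [this] at heq'
    exact (carrier S I l m β).injective (neg_injective heq')
  · intro γ h1 h2
    obtain ⟨u, hu, he⟩ := sgnW_ne_zero h2
    obtain ⟨h3, h4⟩ := Finset.mem_filter.mp h1
    obtain ⟨h5, h6, h7⟩ := flip_term hI hu he h3
    have hback : m = wAct u⁻¹ (sRefl (-(u γ)) l) := by rw [h6, wAct_inv_cancel]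
    have hne : sgnW S (PhiI S I) (sRefl (-(u γ)) l) m ≠ 0 := by
      rw [sgnW_eq hI hm (inv_mem hu) hback]
      exact pow_ne_zero _ (by norm_num)
    refine ⟨-(u γ), Finset.mem_filter.mpr ⟨h5, fun h => h7.mp h h4⟩, hne, ?_⟩
    obtain ⟨hv, hve⟩ := hcar _ hne
    have h8 : (carrier S I l m (-(u γ)))⁻¹ = u := by
      apply hm.free hI (inv_mem hv) hu
      rw [wAct_inv_of_eq hve, h6]
    rw [inv_eq_iff_eq_inv.mp h8, map_neg, neg_neg]
    exact u.symm_apply_apply γ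
  · intro β h1 h2
    obtain ⟨hu, he⟩ := hcar β h2
    obtain ⟨h5, h6, h7⟩ := flip_term hI hu he (Finset.mem_filter.mp h1).1
    rw [sgnW_eq hI hm hu he]
    rw [sgnW_eq hI hl (inv_mem hu) (by rw [h6, wAct_inv_cancel]), len_inv hu]

lemma weyl_conj {A B : Set V} {w : V ≃ₗ[ℝ] V} (hw : IsIso w) (hAB : ∀ α ∈ A, w α ∈ B)
    {u : V ≃ₗ[ℝ] V} (hu : u ∈ weyl A) : w * u * w⁻¹ ∈ weyl B := by
  have : weyl A ≤ (weyl B).comap (MulAut.conj w).toMonoidHom := by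
    refine (Subgroup.closure_le _).mpr ?_
    rintro _ ⟨α, hα, rfl⟩
    refine Subgroup.subset_closure ⟨w α, hAB α hα, ?_⟩
    rw [reflV_conj hw]
    rfl
  exact this hu

end Helpers

/-- Lemma 4.11 (Conjugate invariance): suppose `Φ_I` and `Φ_J` are `W`-conjugate and
`w ∈ W` satisfies `Φ_J ∩ Φ⁺ = w (Φ_I ∩ Φ⁺)`.  Then for all `λ, μ ∈ Λ_I⁺`,
`c̃(λ, μ, Φ_I, Φ) = c̃(wλ, wμ, Φ_J, Φ)`. -/
theorem statement_10 {V : Type*} [NormedAddCommGroup V] [InnerProductSpace ℝ V]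
    [FiniteDimensional ℝ V]
    (S : RootSys V) (I J : Finset V) (hI : I ⊆ S.Δ) (hJ : J ⊆ S.Δ)
    (hconj : ∃ u, u ∈ weyl (S.Φ : Set V) ∧
      PhiI S J = (fun v => u v) '' PhiI S I)
    (w : V ≃ₗ[ℝ] V) (hw : w ∈ weyl (S.Φ : Set V))
    (hwpos : PhiI S J ∩ (S.pos : Set V) = (fun v => w v) '' (PhiI S I ∩ (S.pos : Set V)))
    (lam mu : HStar V) (hlam : lam ∈ LambdaP (I : Set V)) (hmu : mu ∈ LambdaP (I : Set V)) :
    jcSym S (PhiI S I) (S.Φ : Set V) lam mu =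
      jcSym S (PhiI S J) (S.Φ : Set V) (wAct w lam) (wAct w mu) := by
  have hiso := weyl_isIso hw
  have h1 : ∀ z, w (w⁻¹ z) = z := fun z => w.apply_symm_apply z
  have h2 : ∀ z, w⁻¹ (w z) = z := fun z => w.symm_apply_apply z
  have hP : ∀ α, w α ∈ PhiI S J ∩ (S.pos : Set V) ↔ α ∈ PhiI S I ∩ (S.pos : Set V) := by
    intro α
    rw [hwpos]
    constructor
    · rintro ⟨β, hβ, he⟩
      rw [← w.injective he]; exact hβ
    · intro h; exact ⟨α, h, rfl⟩
  have hR : ∀ α, w α ∈ PhiI S J ↔ α ∈ PhiI S I := by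
    intro α
    constructor
    · intro h
      rcases S.mem_pos_or _ h.1 with hp | hp
      · exact ((hP α).mp ⟨h, hp⟩).1
      · have := ((hP (-α)).mp (by rw [map_neg]; exact ⟨PhiI_neg S J h, hp⟩)).1
        simpa using PhiI_neg S I this
    · intro h
      rcases S.mem_pos_or _ h.1 with hp | hp
      · exact ((hP α).mpr ⟨h, hp⟩).1
      · have := ((hP (-α)).mpr ⟨PhiI_neg S I h, hp⟩).1
        rw [map_neg] at this
        simpa using PhiI_neg S J this
  have hdom : ∀ l : HStar V, Dom S I l → Dom S J (wAct w l) := by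
    intro l hl α hα hp
    have h3 := (hP (w⁻¹ α)).mp (by rw [h1]; exact ⟨hα, hp⟩)
    exact hl _ h3.1 h3.2
  have hΦ : ∀ u ∈ weyl (S.Φ : Set V), ∀ β ∈ S.Φ, u β ∈ S.Φ := fun u hu =>
    weyl_stable (B := (S.Φ : Set V)) (fun α ha β hb => S.refl_mem α ha β hb) hu
  have hl := dom_of_lambda hI hlam
  have hm := dom_of_lambda hI hmu
  rw [jcSym_eq hI hl hm, jcSym_eq hJ (hdom _ hl) (hdom _ hm)]
  have hs : ∀ β, sRefl (w β) (wAct w lam) = wAct w (sRefl β lam) := by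
    intro β
    rw [sRefl_eq, sRefl_eq, reflV_conj hiso, ← wAct_mul, ← wAct_mul]
    congr 1
    simp [mul_assoc]
  have hc : ∀ β, wAct w lam (coroot (w β)) = lam (coroot β) := by
    intro β
    rw [coroot_map hiso, wAct_apply, h2]
  refine Finset.sum_bij' (fun β _ => w β) (fun β _ => w⁻¹ β) ?_ ?_ ?_ ?_ ?_
  · intro β hβ
    obtain ⟨h3, h4, h5⟩ := Finset.mem_filter.mp hβ
    refine Finset.mem_filter.mpr ⟨hΦ w hw β h3, fun h => h4 ((hR β).mp h), ?_⟩
    rw [hc]; exact h5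
  · intro β hβ
    obtain ⟨h3, h4, h5⟩ := Finset.mem_filter.mp hβ
    refine Finset.mem_filter.mpr ⟨hΦ w⁻¹ (inv_mem hw) β h3, fun h => h4 ?_, ?_⟩
    · have := (hR _).mpr h
      rwa [h1] at this
    · rw [← hc, h1]; exact h5
  · intro β _; exact h2 β
  · intro β _; exact h1 β
  · intro β _
    rw [hs]
    by_cases hex : ∃ u, u ∈ weyl (PhiI S I) ∧ mu = wAct u (sRefl β lam)
    · obtain ⟨u, hu, he⟩ := hex
      have hu' : w * u * w⁻¹ ∈ weyl (PhiI S J) :=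
        weyl_conj hiso (fun α hα => (hR α).mpr hα) hu
      rw [sgnW_eq hI hm hu he, sgnW_eq hJ (hdom _ hm) hu' (by
        rw [he, ← wAct_mul, ← wAct_mul]; simp [mul_assoc]), len_eq hI hu, len_eq hJ hu']
      congr 1
      rw [← Set.ncard_image_of_injective _ w.injective]
      congr 1
      ext γ
      have h9 : ∀ z, (w * u * w⁻¹) z = w (u (w⁻¹ z)) := fun z => rfl
      constructor
      · rintro ⟨γ, ⟨h3, h4⟩, rfl⟩
        refine ⟨(hP γ).mpr h3, fun h => h4 ?_⟩
        rw [h9, h2] at h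
        exact (hP _).mp h
      · rintro ⟨h3, h4⟩
        refine ⟨w⁻¹ γ, ⟨(hP _).mp (by rw [h1]; exact h3), fun h => h4 ?_⟩, h1 γ⟩
        rw [h9]
        exact (hP _).mpr h
    · have e1 : sgnW S (PhiI S I) (sRefl β lam) mu = 0 := by
        by_contra h; exact hex (sgnW_ne_zero h)
      have e2 : sgnW S (PhiI S J) (wAct w (sRefl β lam)) (wAct w mu) = 0 := by
        by_contra h
        obtain ⟨u, hu, he⟩ := sgnW_ne_zero h
        apply hex
        have hiso' : IsIso w⁻¹ := weyl_isIso (inv_mem hw)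
        have hu' : w⁻¹ * u * w⁻¹⁻¹ ∈ weyl (PhiI S I) :=
          weyl_conj hiso' (fun α hα => (hR _).mp (by rw [h1]; exact hα)) hu
        refine ⟨_, hu', ?_⟩
        rw [inv_inv, wAct_mul, wAct_mul, ← he, wAct_inv_cancel]
      rw [e1, e2]


end JantzenGVM
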